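/- Let I be a finite nonempty index set and for each i ∈ I let fᵢ : ℝⁿ → ℝ be continuous and positive-valued with epigraph Lᵢ. Let K ⊆ ℝⁿ × ℝ be a nonempty closed set containing a point with nonpositive last coordinate and with K ∩ Lᵢ = ∅ for all i ∈ I. Let f_min(x) := min{fᵢ(x) : i ∈ I} and L := ∪_{i∈I} Lᵢ (the epigraph of f_min). Then for every x ∈ ℝⁿ: min{Gᵢ⁻(x) : i ∈ I} ≤ G_min⁻(x) ≤ G_min⁺(x) ≤ min{Gᵢ⁺(x) : i ∈ I}, where Gᵢ± are the upper/lower equidistant functions associated with K and Lᵢ, and G_min± are those associated with K and L. -/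

import Mathlib

open Metric Set

noncomputable section

/-- `ℝⁿ × ℝ` with the Euclidean (ℓ²) metric. -/
abbrev EucProd (n : ℕ) := WithLp 2 (EuclideanSpace ℝ (Fin n) × ℝ)

/-- The point of `ℝⁿ × ℝ` with first component `x` and last coordinate `y`. -/
def pt {n : ℕ} (x : EuclideanSpace ℝ (Fin n)) (y : ℝ) : EucProd n :=
  (WithLp.equiv 2 (EuclideanSpace ℝ (Fin n) × ℝ)).symm (x, y)

/-- The epigraph of `f : ℝⁿ → ℝ`, viewed as a subset of `ℝⁿ × ℝ`. -/
def epigraph {n : ℕ} (f : EuclideanSpace ℝ (Fin n) → ℝ) : Set (EucProd n) :=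
  {p | f ((WithLp.equiv 2 (EuclideanSpace ℝ (Fin n) × ℝ)) p).1 ≤
      ((WithLp.equiv 2 (EuclideanSpace ℝ (Fin n) × ℝ)) p).2}

/-- The upper equidistant function `G⁺` associated with the focal sets `K` and `L`:
`G⁺(x) = sup {y | d((x,y),K) = d((x,y),L)}`. -/
def Gplus {n : ℕ} (K L : Set (EucProd n)) (x : EuclideanSpace ℝ (Fin n)) : ℝ :=
  sSup {y : ℝ | Metric.infDist (pt x y) K = Metric.infDist (pt x y) L}

/-- The lower equidistant function `G⁻` associated with the focal sets `K` and `L`: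
`G⁻(x) = inf {y | d((x,y),K) = d((x,y),L)}`. -/
def Gminus {n : ℕ} (K L : Set (EucProd n)) (x : EuclideanSpace ℝ (Fin n)) : ℝ :=
  sInf {y : ℝ | Metric.infDist (pt x y) K = Metric.infDist (pt x y) L}

/-!
Along the vertical line over `x`, every height in `L i` is strictly closer to `L i` than to `K`,
while every height low enough is strictly closer to `K`: for a point of `K` lying a positive amount
below `L i` near `x`, the difference of the squared distances grows linearly with the depth. Since
the distance to `⋃ i, L i` is the minimum of the finitely many distances to the `L i`, a height
equidistant from `K` and the union is equidistant from `K` and some `L i`, which bounds `G⁻` below.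
At such a height every `L i` is at least as far away as `K`, so by the intermediate value theorem
each `L i` has an equidistant height at or above it, which bounds `G⁺` above.
-/

open Filter

section Crossing

theorem bddBelow_of_eventually_notMem {α : Type*} [LinearOrder α] [Nonempty α] {s : Set α}
    (h : ∀ᶠ y in atBot, y ∉ s) : BddBelow s := by
  obtain ⟨a, ha⟩ := h.exists_forall_of_atBot
  exact ⟨a, fun y hy => le_of_not_ge fun hya => ha y hya hy⟩

theorem bddAbove_of_eventually_notMem {α : Type*} [LinearOrder α] [Nonempty α] {s : Set α}
    (h : ∀ᶠ y in atTop, y ∉ s) : BddAbove s :=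
  bddBelow_of_eventually_notMem (α := αᵒᵈ) h

variable {α β ι : Type*} [LinearOrder β]

theorem bddBelow_setOf_eq_of_eventually_lt [LinearOrder α] [Nonempty α] {g h : α → β}
    (hbot : ∀ᶠ y in atBot, g y < h y) : BddBelow {y | g y = h y} :=
  bddBelow_of_eventually_notMem (hbot.mono fun _ => LT.lt.ne)

theorem bddAbove_setOf_eq_of_eventually_lt [LinearOrder α] [Nonempty α] {g h : α → β}
    (htop : ∀ᶠ y in atTop, h y < g y) : BddAbove {y | g y = h y} :=
  bddAbove_of_eventually_notMem (htop.mono fun _ => LT.lt.ne')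

variable [ConditionallyCompleteLinearOrder α]

theorem inf'_sInf_setOf_eq_le {g : α → β} {h : ι → α → β} {s : Finset ι} (hs : s.Nonempty)
    (hbot : ∀ i ∈ s, ∀ᶠ y in atBot, g y < h i y)
    (hne : {y | g y = s.inf' hs fun i => h i y}.Nonempty) :
    (s.inf' hs fun i => sInf {y | g y = h i y}) ≤ sInf {y | g y = s.inf' hs fun i => h i y} := by
  refine le_csInf hne fun y hy => ?_
  obtain ⟨i, hi, hmin⟩ := s.exists_mem_eq_inf' hs fun i => h i y
  exact (s.inf'_le _ hi).trans
    (csInf_le (bddBelow_setOf_eq_of_eventually_lt (hbot i hi)) (hy.trans hmin))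

variable [TopologicalSpace α] [OrderTopology α] [DenselyOrdered α]
  [TopologicalSpace β] [OrderClosedTopology β] {g : α → β}

theorem exists_ge_eq_of_le_of_eventually_le {h : α → β} {a : α} (hg : Continuous g)
    (hh : Continuous h) (ha : g a ≤ h a) (htop : ∀ᶠ y in atTop, h y ≤ g y) :
    ∃ c, a ≤ c ∧ g c = h c :=
  isPreconnected_Ici.intermediate_value₂_eventually₁ self_mem_Ici
    (le_principal_iff.2 (Ici_mem_atTop a)) hg.continuousOn hh.continuousOn ha htop

theorem nonempty_setOf_eq_of_eventually_le {h : α → β} (hg : Continuous g) (hh : Continuous h)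
    (hbot : ∀ᶠ y in atBot, g y ≤ h y) (htop : ∀ᶠ y in atTop, h y ≤ g y) :
    {y | g y = h y}.Nonempty := by
  obtain ⟨a, ha⟩ := hbot.exists
  obtain ⟨c, -, hc⟩ := exists_ge_eq_of_le_of_eventually_le hg hh ha htop
  exact ⟨c, hc⟩

theorem sInf_setOf_eq_le_sSup_setOf_eq {h : α → β} (hg : Continuous g) (hh : Continuous h)
    (hbot : ∀ᶠ y in atBot, g y < h y) (htop : ∀ᶠ y in atTop, h y < g y) :
    sInf {y | g y = h y} ≤ sSup {y | g y = h y} :=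
  csInf_le_csSup
    (nonempty_setOf_eq_of_eventually_le hg hh (hbot.mono fun _ => le_of_lt)
      (htop.mono fun _ => le_of_lt))
    (bddBelow_setOf_eq_of_eventually_lt hbot) (bddAbove_setOf_eq_of_eventually_lt htop)

theorem sSup_setOf_eq_le_inf' {h : ι → α → β} {s : Finset ι} (hs : s.Nonempty)
    (hg : Continuous g) (hh : ∀ i ∈ s, Continuous (h i))
    (htop : ∀ i ∈ s, ∀ᶠ y in atTop, h i y < g y)
    (hne : {y | g y = s.inf' hs fun i => h i y}.Nonempty) :
    sSup {y | g y = s.inf' hs fun i => h i y} ≤ s.inf' hs fun i => sSup {y | g y = h i y} := by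
  refine Finset.le_inf' hs _ fun i hi => csSup_le hne fun y hy => ?_
  have hle : g y ≤ h i y := hy.trans_le (s.inf'_le _ hi)
  obtain ⟨c, hyc, hc⟩ := exists_ge_eq_of_le_of_eventually_le hg (hh i hi) hle
    ((htop i hi).mono fun _ => le_of_lt)
  exact hyc.trans (le_csSup (bddAbove_setOf_eq_of_eventually_lt (htop i hi)) hc)

theorem inf'_sInf_le_sInf_le_sSup_le_inf'_sSup {h : ι → α → β} {s : Finset ι} (hs : s.Nonempty)
    (hg : Continuous g) (hh : ∀ i ∈ s, Continuous (h i))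
    (hbot : ∀ i ∈ s, ∀ᶠ y in atBot, g y < h i y)
    (htop : ∀ i ∈ s, ∀ᶠ y in atTop, h i y < g y) :
    (s.inf' hs fun i => sInf {y | g y = h i y}) ≤ sInf {y | g y = s.inf' hs fun i => h i y} ∧
      sInf {y | g y = s.inf' hs fun i => h i y} ≤ sSup {y | g y = s.inf' hs fun i => h i y} ∧
      sSup {y | g y = s.inf' hs fun i => h i y} ≤ s.inf' hs fun i => sSup {y | g y = h i y} := by
  have hmin : Continuous fun y => s.inf' hs fun i => h i y := .finset_inf'_apply hs hh
  have hmin_bot : ∀ᶠ y in atBot, g y < s.inf' hs fun i => h i y := by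
    simpa only [Finset.lt_inf'_iff, eventually_all_finset] using hbot
  have hmin_top : ∀ᶠ y in atTop, (s.inf' hs fun i => h i y) < g y := by
    obtain ⟨i, hi⟩ := hs
    exact (htop i hi).mono fun y hy => (s.inf'_le _ hi).trans_lt hy
  have hne := nonempty_setOf_eq_of_eventually_le hg hmin (hmin_bot.mono fun _ => le_of_lt)
    (hmin_top.mono fun _ => le_of_lt)
  exact ⟨inf'_sInf_setOf_eq_le hs hbot hne,
    sInf_setOf_eq_le_sSup_setOf_eq hg hmin hmin_bot hmin_top,
    sSup_setOf_eq_le_inf' hs hg hh htop hne⟩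

end Crossing

theorem infDist_iUnion {X : Type*} {ι : Sort*} [PseudoMetricSpace X] {L : ι → Set X}
    (hL : ∀ i, (L i).Nonempty) (p : X) : infDist p (⋃ i, L i) = ⨅ i, infDist p (L i) := by
  simp only [infDist, infEDist_iUnion]
  exact ENNReal.toReal_iInf fun i => infEDist_ne_top (hL i)

section VerticalLine

variable {E : Type*}

/-- The epigraph of a function on any base `E`, as a subset of `E × ℝ` with the Euclidean product
metric. For `E = ℝⁿ` it unfolds to the same set as `epigraph`. -/
def l2Epigraph (f : E → ℝ) : Set (WithLp 2 (E × ℝ)) :=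
  {p | f p.fst ≤ p.snd}

theorem nonempty_l2Epigraph (f : E → ℝ) (x : E) : (l2Epigraph f).Nonempty :=
  ⟨WithLp.toLp 2 (x, f x), le_refl (f x)⟩

variable [PseudoMetricSpace E]

/-- The heights at which the vertical line over `x` is equidistant from `K` and `L`. For `E = ℝⁿ`
its supremum and infimum unfold to `Gplus K L x` and `Gminus K L x`. -/
def equidistantHeights (K L : Set (WithLp 2 (E × ℝ))) (x : E) : Set ℝ :=
  {y | infDist (WithLp.toLp 2 (x, y)) K = infDist (WithLp.toLp 2 (x, y)) L}

theorem continuous_infDist_toLp (S : Set (WithLp 2 (E × ℝ))) (x : E) :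
    Continuous fun y : ℝ => infDist (WithLp.toLp 2 (x, y)) S :=
  (continuous_infDist_pt S).comp
    ((WithLp.prod_continuous_toLp 2 E ℝ).comp (Continuous.prodMk_right x))

theorem dist_toLp_eq_sqrt (x : E) (y : ℝ) (q : WithLp 2 (E × ℝ)) :
    dist (WithLp.toLp 2 (x, y)) q = √(dist x q.fst ^ 2 + (q.snd - y) ^ 2) := by
  simp [WithLp.prod_dist_eq_add, Real.sqrt_eq_rpow, dist_comm y, Real.dist_eq]

theorem sqrt_le_dist_toLp_of_near_imp_le {x : E} {y c m ρ : ℝ} {q : WithLp 2 (E × ℝ)}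
    (hρ : 0 ≤ ρ) (hyc : y ≤ c) (hq : c ≤ q.snd) (hnear : dist x q.fst ≤ ρ → m ≤ q.snd)
    (hgap : ρ ^ 2 ≤ 2 * (c - y) * (m - c)) :
    √(ρ ^ 2 + (c - y) ^ 2) ≤ dist (WithLp.toLp 2 (x, y)) q := by
  rw [dist_toLp_eq_sqrt]
  refine Real.sqrt_le_sqrt ?_
  rcases le_or_gt (dist x q.fst) ρ with near | far
  · calc ρ ^ 2 + (c - y) ^ 2
        ≤ 2 * (c - y) * (m - c) + (c - y) ^ 2 := by gcongr
      _ ≤ 2 * (c - y) * (q.snd - c) + (c - y) ^ 2 := by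
          gcongr
          exact hnear near
      _ ≤ (q.snd - y) ^ 2 := by linarith [sq_nonneg (q.snd - c)]
      _ ≤ dist x q.fst ^ 2 + (q.snd - y) ^ 2 := le_add_of_nonneg_left (sq_nonneg _)
  · gcongr

theorem eventually_atBot_infDist_lt_of_forall_near {K L : Set (WithLp 2 (E × ℝ))} {x : E}
    {p : WithLp 2 (E × ℝ)} {m ρ : ℝ} (hp : p ∈ K) (hL : L.Nonempty) (hρ : dist x p.fst < ρ)
    (hm : p.snd < m) (habove : ∀ q ∈ L, p.snd ≤ q.snd)
    (hnear : ∀ q ∈ L, dist x q.fst ≤ ρ → m ≤ q.snd) :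
    ∀ᶠ y in atBot, infDist (WithLp.toLp 2 (x, y)) K < infDist (WithLp.toLp 2 (x, y)) L := by
  have hρ₀ : 0 < ρ := dist_nonneg.trans_lt hρ
  filter_upwards [eventually_le_atBot p.snd,
    eventually_le_atBot (p.snd - ρ ^ 2 / (2 * (m - p.snd)))] with y hy hgap
  have hgap' : ρ ^ 2 ≤ 2 * (p.snd - y) * (m - p.snd) := by
    have : ρ ^ 2 / (2 * (m - p.snd)) ≤ p.snd - y := by linarith
    rw [div_le_iff₀ (by linarith)] at this
    linarith
  calc infDist (WithLp.toLp 2 (x, y)) K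
      ≤ dist (WithLp.toLp 2 (x, y)) p := infDist_le_dist_of_mem hp
    _ = √(dist x p.fst ^ 2 + (p.snd - y) ^ 2) := dist_toLp_eq_sqrt x y p
    _ < √(ρ ^ 2 + (p.snd - y) ^ 2) := by gcongr
    _ ≤ infDist (WithLp.toLp 2 (x, y)) L := (le_infDist hL).2 fun q hq =>
        sqrt_le_dist_toLp_of_near_imp_le hρ₀.le hy (habove q hq) (hnear q hq) hgap'

theorem eventually_atBot_infDist_lt_infDist_l2Epigraph [ProperSpace E] {f : E → ℝ}
    {K : Set (WithLp 2 (E × ℝ))} {p : WithLp 2 (E × ℝ)} (hf : LowerSemicontinuous f)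
    (hp : p ∈ K) (hpf : ∀ x, p.snd < f x) (x : E) :
    ∀ᶠ y in atBot,
      infDist (WithLp.toLp 2 (x, y)) K < infDist (WithLp.toLp 2 (x, y)) (l2Epigraph f) := by
  set ρ := dist x p.fst + 1
  obtain ⟨z, -, hz⟩ := (hf.lowerSemicontinuousOn (closedBall x ρ)).exists_isMinOn
    (nonempty_closedBall.2 (by positivity)) (isCompact_closedBall x ρ)
  exact eventually_atBot_infDist_lt_of_forall_near hp (nonempty_l2Epigraph f x) (lt_add_one _)
    (hpf z) (fun q hq => (hpf q.fst).le.trans hq)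
    fun q hq hqρ => (isMinOn_iff.1 hz q.fst (mem_closedBall'.2 hqρ)).trans hq

theorem eventually_atTop_infDist_l2Epigraph_lt_infDist {f : E → ℝ} {K : Set (WithLp 2 (E × ℝ))}
    (hK : IsClosed K) (hKne : K.Nonempty) (hdisj : Disjoint K (l2Epigraph f)) (x : E) :
    ∀ᶠ y in atTop,
      infDist (WithLp.toLp 2 (x, y)) (l2Epigraph f) < infDist (WithLp.toLp 2 (x, y)) K := by
  filter_upwards [eventually_ge_atTop (f x)] with y hy
  have hmem : WithLp.toLp 2 (x, y) ∈ l2Epigraph f := hy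
  rw [infDist_zero_of_mem hmem]
  exact (hK.notMem_iff_infDist_pos hKne).1 (hdisj.notMem_of_mem_right hmem)

end VerticalLine

theorem stmt6_general {E ι : Type*} [PseudoMetricSpace E] [ProperSpace E] [Fintype ι] [Nonempty ι]
    {f : ι → E → ℝ} (hf : ∀ i, LowerSemicontinuous (f i)) {K : Set (WithLp 2 (E × ℝ))}
    (hK : IsClosed K) {p : WithLp 2 (E × ℝ)} (hp : p ∈ K) (hpf : ∀ i x, p.snd < f i x)
    (hdisj : ∀ i, Disjoint K (l2Epigraph (f i))) (x : E) :
    (Finset.univ.inf' Finset.univ_nonempty fun i =>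
        sInf (equidistantHeights K (l2Epigraph (f i)) x)) ≤
        sInf (equidistantHeights K (⋃ i, l2Epigraph (f i)) x) ∧
      sInf (equidistantHeights K (⋃ i, l2Epigraph (f i)) x) ≤
        sSup (equidistantHeights K (⋃ i, l2Epigraph (f i)) x) ∧
      sSup (equidistantHeights K (⋃ i, l2Epigraph (f i)) x) ≤
        Finset.univ.inf' Finset.univ_nonempty fun i =>
          sSup (equidistantHeights K (l2Epigraph (f i)) x) := by
  simp only [equidistantHeights, infDist_iUnion fun i => nonempty_l2Epigraph (f i) x,
    ← Finset.inf'_univ_eq_ciInf]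
  exact inf'_sInf_le_sInf_le_sSup_le_inf'_sSup Finset.univ_nonempty (continuous_infDist_toLp K x)
    (fun i _ => continuous_infDist_toLp (l2Epigraph (f i)) x)
    (fun i _ => eventually_atBot_infDist_lt_infDist_l2Epigraph (hf i) hp (hpf i) x)
    (fun i _ => eventually_atTop_infDist_l2Epigraph_lt_infDist hK ⟨p, hp⟩ (hdisj i) x)

theorem stmt6 {n : ℕ} (I : Type) [Fintype I] [Nonempty I]
    (f : I → EuclideanSpace ℝ (Fin n) → ℝ)
    (hf : ∀ i, Continuous (f i)) (hfpos : ∀ i x, 0 < f i x)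
    (L : I → Set (EucProd n)) (hL : ∀ i, L i = epigraph (f i))
    (K : Set (EucProd n)) (hKcl : IsClosed K) (hKne : K.Nonempty)
    (x₀ : EuclideanSpace ℝ (Fin n)) (y₀ : ℝ) (hx₀ : pt x₀ y₀ ∈ K) (hy₀ : y₀ ≤ 0)
    (hdisj : ∀ i, K ∩ L i = ∅)
    (fmin : EuclideanSpace ℝ (Fin n) → ℝ)
    (hfmin : ∀ x, fmin x = Finset.univ.inf' Finset.univ_nonempty (fun i => f i x))
    (Lmin : Set (EucProd n)) (hLmin : Lmin = ⋃ i, L i)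
    (x : EuclideanSpace ℝ (Fin n)) :
    Finset.univ.inf' Finset.univ_nonempty (fun i => Gminus K (L i) x) ≤
        Gminus K Lmin x ∧
      Gminus K Lmin x ≤ Gplus K Lmin x ∧
      Gplus K Lmin x ≤ Finset.univ.inf' Finset.univ_nonempty (fun i => Gplus K (L i) x) := by
  obtain rfl : L = fun i => epigraph (f i) := funext hL
  subst hLmin
  exact stmt6_general (fun i => (hf i).lowerSemicontinuous) hKcl hx₀
    (fun i x => hy₀.trans_lt (hfpos i x)) (fun i => disjoint_iff_inter_eq_empty.2 (hdisj i)) x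

end
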